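/- Each of the operators T_k (1 ≤ k ≤ n−1), X_i, Y'_i, (Y'_i)^{−1}, D'_i (1 ≤ i ≤ n) maps the polynomial subring P into itself, and P is irreducible under their joint action: the only F-linear subspaces V ⊆ P satisfying T_k(V) ⊆ V, X_i(V) ⊆ V, Y'_i(V) ⊆ V, (Y'_i)^{−1}(V) ⊆ V and D'_i(V) ⊆ V for all admissible i and k are V = {0} and V = P. -/

import Mathlib

noncomputable section

/-- The Laurent polynomial ring `R[X₁^{±1}, …, Xₙ^{±1}]` in `n` variables over `R`,
realised as the monoid algebra of the additive monoid `Fin n →₀ ℤ` of exponent vectors. -/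
abbrev Laur (R : Type*) [CommRing R] (n : ℕ) : Type _ :=
  AddMonoidAlgebra R (Fin n →₀ ℤ)

variable {R : Type*} [CommRing R] {n : ℕ}

/-- The monomial `c · X^a`. -/
def mono (a : Fin n →₀ ℤ) (c : R) : Laur R n := AddMonoidAlgebra.single a c

/-- The generator `X_i`. -/
def Xel (i : Fin n) : Laur R n := mono (Finsupp.single i 1) 1

/-- The element `X_i⁻¹`. -/
def XinvEl (i : Fin n) : Laur R n := mono (Finsupp.single i (-1)) 1

/-- Multiplication by a Laurent polynomial, as a linear endomorphism. -/
def mulOp (x : Laur R n) : Module.End R (Laur R n) := LinearMap.mulLeft R x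

/-- The operator of multiplication by `X_i`, with `ℕ`-indexing (`0`-based; junk value `1`
out of range). -/
def XOp (i : ℕ) : Module.End R (Laur R n) :=
  if h : i < n then mulOp (Xel ⟨i, h⟩) else 1

/-- The operator of multiplication by `X_i⁻¹`, with `ℕ`-indexing. -/
def XinvOp (i : ℕ) : Module.End R (Laur R n) :=
  if h : i < n then mulOp (XinvEl ⟨i, h⟩) else 1

/-- Ascending product `f s * f (s+1) * ⋯ * f (s+len-1)` (equal to `1` when `len = 0`). -/
def aF {M : Type*} [Monoid M] (f : ℕ → M) (s len : ℕ) : M :=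
  ((List.range' s len).map f).prod

/-- Descending product `f (s+len-1) * ⋯ * f (s+1) * f s` (equal to `1` when `len = 0`). -/
def dF {M : Type*} [Monoid M] (f : ℕ → M) (s len : ℕ) : M :=
  (((List.range' s len).map f).reverse).prod

/-- Integer power `u^z`, where `v` is a designated (two-sided) inverse of `u`. -/
def zpowOp {M : Type*} [Monoid M] (u v : M) (z : ℤ) : M :=
  if 0 ≤ z then u ^ z.toNat else v ^ (-z).toNat

/-- The polynomial subring `F[X_1, …, X_n] ⊆ L`, as an `F`-subspace: the span of the
monomials with nonnegative exponents. -/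
def polySub (F : Type*) [Field F] (n : ℕ) : Submodule F (Laur F n) :=
  Submodule.span F {p | ∃ a : Fin n →₀ ℤ, (∀ i, 0 ≤ a i) ∧ p = mono a 1}

/-! Let `V ≠ 0` be an invariant subspace of polynomials, let `d` be the least total degree of a
nonzero element of `V`, and let `U ⊆ V` be the finite-dimensional subspace of the elements of degree
at most `d`. The operators `T_k` and `Y'_i` do not raise degrees, whereas `D'_n` lowers them, so
`D'_n` kills `U` by minimality of `d`. Hence `Y'_n` and its inverse agree on `U`, and
`(det Y'_n|_U)² = 1`. The Hecke relation makes `det T_k|_U` equal to `±` a power of `τ`, so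
`det π⁻¹|_U` is, up to sign, a power of `τ` too. But `π⁻ⁿ` multiplies a monomial of degree `d`
by `q^d`, and thus acts on `U` by this scalar: a nontrivial power of `q` equals a power of `τ`
unless `d = 0`. So `V` contains the constants, and therefore every polynomial.

That `D'_n` preserves polynomials rests on the congruence `Y'_n p ≡ p` modulo `X_n`: modulo `X_k`,
the operator `τ T_k⁻¹` is the transposition `s_k`, so `τ^{n-1} T_1⁻¹ ⋯ T_{n-1}⁻¹` is a cyclic
permutation modulo `X_1`, and `π⁻¹`, which sends multiples of `X_1` to multiples of `X_n`, undoes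
that permutation on the monomials free of `X_n`. -/

section Preserving

variable {K M : Type*}

/-- The algebra of endomorphisms that map a submodule into itself. -/
def preserving [CommSemiring K] [AddCommMonoid M] [Module K M] (U : Submodule K M) :
    Subalgebra K (Module.End K M) where
  carrier := {f | ∀ x ∈ U, f x ∈ U}
  mul_mem' hf hg x hx := hf _ (hg x hx)
  add_mem' hf hg x hx := U.add_mem (hf x hx) (hg x hx)
  algebraMap_mem' c _ hx := U.smul_mem c hx

theorem preserving_inf_le [CommSemiring K] [AddCommMonoid M] [Module K M] (U V : Submodule K M) :
    preserving U ⊓ preserving V ≤ preserving (U ⊓ V) :=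
  fun _ hf x hx => ⟨hf.1 x hx.1, hf.2 x hx.2⟩

variable [Field K] [AddCommGroup M] [Module K M] {U : Submodule K M} {f g : Module.End K M}

theorem mem_preserving_of_mul_eq_one [FiniteDimensional K U] (hgf : g * f = 1)
    (hf : f ∈ preserving U) : g ∈ preserving U := by
  have hg : Function.LeftInverse g f := fun x => LinearMap.congr_fun hgf x
  have hinj : Function.Injective (f.restrict hf) := fun x y hxy =>
    Subtype.ext (hg.injective (congrArg Subtype.val hxy))
  intro x hx
  obtain ⟨u, hu⟩ := LinearMap.surjective_of_injective hinj ⟨x, hx⟩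
  have hfu : f u = x := congrArg Subtype.val hu
  rw [← hfu, hg u]
  exact u.2

theorem det_eq_pow_mul_pow_of_sub_smul_mul_sub_smul_eq_zero [FiniteDimensional K M] {a b : K}
    (h : (f - a • 1) * (f - b • 1) = 0) : ∃ r s : ℕ, LinearMap.det f = a ^ r * b ^ s := by
  let W := LinearMap.ker (f - a • 1)
  have hfW : ∀ x ∈ W, f x = a • x := fun x hx => sub_eq_zero.mp hx
  have hW : ∀ x ∈ W, f x ∈ W := fun x hx => (hfW x hx).symm ▸ W.smul_mem a hx
  have hsub : f.restrict hW = a • 1 := LinearMap.ext fun x => Subtype.ext (hfW x x.2)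
  have hquot : W.mapQ W f hW = b • 1 := by
    refine Submodule.linearMap_qext _ (LinearMap.ext fun x => ?_)
    exact (Submodule.Quotient.eq W).mpr (LinearMap.congr_fun h x)
  refine ⟨Module.finrank K W, Module.finrank K (M ⧸ W), ?_⟩
  rw [LinearMap.det_eq_det_mul_det W f hW, hsub, hquot]
  simp only [LinearMap.det_smul, map_one, mul_one]

/-- The endomorphisms that map `U` into itself and whose restriction to `U` has determinant in
the group `S` of units. -/
def preservingDet (U : Submodule K M) (S : Subgroup Kˣ) : Submonoid (Module.End K M) where
  carrier := {f | ∃ h : ∀ x ∈ U, f x ∈ U, ∃ c ∈ S, LinearMap.det (f.restrict h) = c}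
  one_mem' := ⟨fun _ hx => hx, 1, S.one_mem, LinearMap.det_id⟩
  mul_mem' := by
    rintro f g ⟨hf, c, hc, hfc⟩ ⟨hg, d, hd, hgd⟩
    refine ⟨fun x hx => hf _ (hg x hx), c * d, S.mul_mem hc hd, ?_⟩
    rw [Units.val_mul, ← hfc, ← hgd, ← map_mul]
    rfl

variable {S : Subgroup Kˣ}

theorem smul_mem_preservingDet {c : Kˣ} (hc : c ∈ S) (hf : f ∈ preservingDet U S) :
    (c : K) • f ∈ preservingDet U S := by
  obtain ⟨hf, d, hd, hfd⟩ := hf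
  refine ⟨fun x hx => U.smul_mem _ (hf x hx), c ^ Module.finrank K U * d,
    S.mul_mem (S.pow_mem hc _) hd, ?_⟩
  rw [Units.val_mul, Units.val_pow_eq_pow_val, ← hfd, ← LinearMap.det_smul]
  rfl

theorem mem_preservingDet_of_mul_mem [FiniteDimensional K U] (hfg : f * g ∈ preservingDet U S)
    (hg : g ∈ preservingDet U S) : f ∈ preservingDet U S := by
  obtain ⟨hfg, c, hc, hfgc⟩ := hfg
  obtain ⟨hg, d, hd, hgd⟩ := hg
  have hsurj : Function.Surjective (g.restrict hg) := by
    have hunit : IsUnit (g.restrict hg) :=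
      (LinearMap.isUnit_iff_isUnit_det _).mpr (hgd ▸ d.isUnit)
    exact ((Module.End.isUnit_iff _).mp hunit).surjective
  have hf : ∀ x ∈ U, f x ∈ U := fun x hx => by
    obtain ⟨u, hu⟩ := hsurj ⟨x, hx⟩
    have hgu : g u = x := congrArg Subtype.val hu
    rw [← hgu]
    exact hfg u u.2
  refine ⟨hf, c * d⁻¹, S.mul_mem hc (S.inv_mem hd), ?_⟩
  have hmul : (f * g).restrict hfg = f.restrict hf * g.restrict hg := rfl
  rw [Units.val_mul, ← hfgc, hmul, map_mul, hgd, mul_assoc, Units.mul_inv, mul_one]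

theorem mem_preservingDet_of_sub_smul_mul_sub_smul_eq_zero [FiniteDimensional K U] {a b : Kˣ}
    (ha : a ∈ S) (hb : b ∈ S) (hf : f ∈ preserving U)
    (h : (f - (a : K) • 1) * (f - (b : K) • 1) = 0) : f ∈ preservingDet U S := by
  have hU : (f.restrict hf - (a : K) • 1) * (f.restrict hf - (b : K) • 1) = 0 :=
    LinearMap.ext fun x => Subtype.ext (LinearMap.congr_fun h x)
  obtain ⟨r, s, hdet⟩ := det_eq_pow_mul_pow_of_sub_smul_mul_sub_smul_eq_zero hU
  exact ⟨hf, a ^ r * b ^ s, S.mul_mem (S.pow_mem ha r) (S.pow_mem hb s), by simpa using hdet⟩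

/-- The units whose square is an integral power of `t`. Squaring makes the group insensitive to the
signs of determinants. -/
def sqrtZPowers (t : Kˣ) : Subgroup Kˣ := (Subgroup.zpowers t).comap (powMonoidHom 2)

theorem mem_sqrtZPowers {t c : Kˣ} : c ∈ sqrtZPowers t ↔ ∃ z : ℤ, t ^ z = c ^ 2 :=
  Subgroup.mem_zpowers_iff

theorem self_mem_sqrtZPowers (t : Kˣ) : t ∈ sqrtZPowers t :=
  mem_sqrtZPowers.mpr ⟨2, by norm_cast⟩

theorem neg_self_mem_sqrtZPowers (t : Kˣ) : -t ∈ sqrtZPowers t :=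
  mem_sqrtZPowers.mpr ⟨2, by rw [neg_sq]; norm_cast⟩

theorem mem_preservingDet_sqrtZPowers_of_involutive {t : Kˣ} (hf : f ∈ preserving U)
    (h : ∀ x ∈ U, f (f x) = x) : f ∈ preservingDet U (sqrtZPowers t) := by
  have hsq : LinearMap.det (f.restrict hf) * LinearMap.det (f.restrict hf) = 1 := by
    have hone : f.restrict hf * f.restrict hf = 1 :=
      LinearMap.ext fun x => Subtype.ext (h x x.2)
    rw [← map_mul, hone, map_one]
  refine ⟨hf, Units.mkOfMulEqOne _ _ hsq, mem_sqrtZPowers.mpr ⟨0, ?_⟩, rfl⟩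
  ext
  simp [sq, hsq]

theorem exists_pow_finrank_eq_zpow_of_mem_preservingDet {t : Kˣ} {c : K}
    (hf : f ∈ preservingDet U (sqrtZPowers t)) (h : ∀ x ∈ U, f x = c • x) :
    ∃ z : ℤ, c ^ (Module.finrank K U * 2) = (t : K) ^ z := by
  obtain ⟨hf, d, hd, hfd⟩ := hf
  obtain ⟨z, hz⟩ := mem_sqrtZPowers.mp hd
  have hscalar : f.restrict hf = c • 1 := LinearMap.ext fun x => Subtype.ext (h x x.2)
  rw [hscalar, LinearMap.det_smul, map_one, mul_one] at hfd
  exact ⟨z, by rw [pow_mul, hfd]; exact_mod_cast hz.symm⟩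

end Preserving

section OrderedProducts

variable {M A : Type*} [Monoid M] [SetLike A M] [SubmonoidClass A M] {S : A} {f : ℕ → M}
  {s len : ℕ}

theorem aF_mem (h : ∀ k, s ≤ k → k < s + len → f k ∈ S) : aF f s len ∈ S :=
  list_prod_mem <| List.forall_mem_map.mpr fun k hk =>
    h k (List.mem_range'_1.mp hk).1 (List.mem_range'_1.mp hk).2

theorem dF_mem (h : ∀ k, s ≤ k → k < s + len → f k ∈ S) : dF f s len ∈ S :=
  list_prod_mem fun _ hx => List.forall_mem_map.mpr
    (fun k hk => h k (List.mem_range'_1.mp hk).1 (List.mem_range'_1.mp hk).2) _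
    (List.mem_reverse.mp hx)

@[simp]
theorem aF_len_zero (f : ℕ → M) (s : ℕ) : aF f s 0 = 1 := rfl

@[simp]
theorem dF_len_zero (f : ℕ → M) (s : ℕ) : dF f s 0 = 1 := rfl

theorem aF_len_succ (f : ℕ → M) (s len : ℕ) : aF f s (len + 1) = aF f s len * f (s + len) := by
  simp [aF, List.range'_1_concat]

end OrderedProducts

namespace Laur

section Monomials

theorem mono_zero_one : mono (0 : Fin n →₀ ℤ) (1 : R) = 1 := rfl

theorem mono_mul_mono (a b : Fin n →₀ ℤ) (r s : R) :
    mono a r * mono b s = mono (a + b) (r * s) :=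
  AddMonoidAlgebra.single_mul_single ..

theorem Xel_mul_mono (j : Fin n) (a : Fin n →₀ ℤ) (r : R) :
    Xel j * mono a r = mono (Finsupp.single j 1 + a) r := by
  rw [Xel, mono_mul_mono, one_mul]

theorem Xel_mul_XinvEl (j : Fin n) : (Xel j * XinvEl j : Laur R n) = 1 := by
  rw [XinvEl, Xel_mul_mono, ← Finsupp.single_add, add_neg_cancel, Finsupp.single_zero,
    mono_zero_one]

theorem Xel_mul_left_cancel {j : Fin n} {p p' : Laur R n} (h : Xel j * p = Xel j * p') : p = p' :=
  (IsUnit.of_mul_eq_one _ (Xel_mul_XinvEl j)).mul_left_cancel h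

theorem Xel_sub_Xel_ne_zero [Nontrivial R] {x y : Fin n} (hxy : x ≠ y) :
    (Xel y - Xel x : Laur R n) ≠ 0 := by
  intro h
  have hexp := (AddMonoidAlgebra.single_left_inj (one_ne_zero (α := R))).mp (sub_eq_zero.mp h)
  exact hxy (Finsupp.single_left_injective one_ne_zero hexp).symm

theorem end_ext {f g : Module.End R (Laur R n)} (h : ∀ a r, f (mono a r) = g (mono a r)) :
    f = g :=
  AddMonoidAlgebra.lhom_ext' fun a => LinearMap.ext (h a)

end Monomials

section Permutations

/-- The action of a permutation `w` of the variables on Laurent polynomials, `X_i ↦ X_{w i}`. -/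
def permVars (w : Equiv.Perm (Fin n)) : Laur R n ≃ₐ[R] Laur R n :=
  AddMonoidAlgebra.domCongr R R (Finsupp.domCongr w)

theorem permVars_mono (w : Equiv.Perm (Fin n)) (a : Fin n →₀ ℤ) (r : R) :
    permVars w (mono a r) = mono (Finsupp.equivMapDomain w a) r :=
  AddMonoidAlgebra.domCongr_single ..

theorem permVars_Xel (w : Equiv.Perm (Fin n)) (j : Fin n) :
    permVars w (Xel j : Laur R n) = Xel (w j) := by
  rw [Xel, permVars_mono, Finsupp.equivMapDomain_single, Xel]

theorem permVars_mul_apply (w w' : Equiv.Perm (Fin n)) (p : Laur R n) :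
    permVars (w * w') p = permVars w (permVars w' p) := by
  have h : (permVars (w * w')).toLinearMap =
      (permVars w).toLinearMap * (permVars w' : Laur R n ≃ₐ[R] Laur R n).toLinearMap :=
    end_ext fun a r => by
      simp only [Module.End.mul_apply, AlgEquiv.toLinearMap_apply, permVars_mono]
      exact congrArg (mono · r) (Finsupp.equivMapDomain_trans w' w a)
  exact LinearMap.congr_fun h p

theorem permVars_one_apply (p : Laur R n) : permVars 1 p = p :=
  (permVars 1).injective (by rw [← permVars_mul_apply, one_mul])

theorem eq_permVars_of_forall_mono {w : Equiv.Perm (Fin n)} {f : Module.End R (Laur R n)}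
    (h : ∀ a r, f (mono a r) = mono (Finsupp.equivMapDomain w a) r) :
    f = (permVars w).toLinearMap :=
  end_ext fun a r => (h a r).trans (permVars_mono w a r).symm

end Permutations

section Exponents

theorem sum_single_add (j : Fin n) (z : ℤ) (a : Fin n →₀ ℤ) :
    ∑ i, (Finsupp.single j z + a) i = z + ∑ i, a i := by
  simp [Finset.sum_add_distrib, Finsupp.single_apply]

theorem sum_equivMapDomain (w : Equiv.Perm (Fin n)) (a : Fin n →₀ ℤ) :
    ∑ i, Finsupp.equivMapDomain w a i = ∑ i, a i :=
  Equiv.sum_comp w.symm a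

theorem exists_eq_single_add {a : Fin n →₀ ℤ} (ha : 0 ≤ a) {j : Fin n} (hj : a j ≠ 0) :
    ∃ b, 0 ≤ b ∧ a = Finsupp.single j 1 + b := by
  refine ⟨a - Finsupp.single j 1, fun i => ?_, (add_sub_cancel _ _).symm⟩
  have hi : 0 ≤ a i := ha i
  rw [Finsupp.coe_zero, Pi.zero_apply, Finsupp.sub_apply, Finsupp.single_apply]
  split_ifs with h
  · subst h; omega
  · omega

theorem single_one_add_nonneg {a : Fin n →₀ ℤ} (ha : 0 ≤ a) (j : Fin n) :
    0 ≤ Finsupp.single j 1 + a :=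
  add_nonneg (Finsupp.single_nonneg.mpr zero_le_one) ha

theorem equivMapDomain_nonneg {a : Fin n →₀ ℤ} (ha : 0 ≤ a) (w : Equiv.Perm (Fin n)) :
    0 ≤ Finsupp.equivMapDomain w a :=
  fun _ => ha _

theorem sum_nonneg_of_nonneg {a : Fin n →₀ ℤ} (ha : 0 ≤ a) : 0 ≤ ∑ i, a i :=
  Finset.sum_nonneg fun i _ => ha i

end Exponents

section Filtration

variable {F : Type*} [Field F]

theorem mono_mem_supported {S : Set (Fin n →₀ ℤ)} {a : Fin n →₀ ℤ} (ha : a ∈ S) (r : F) :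
    mono a r ∈ AddMonoidAlgebra.supported F F S :=
  AddMonoidAlgebra.mem_supported'.mpr fun m hm => by
    have hne : a ≠ m := fun h => hm (h ▸ ha)
    simp [mono, hne]

theorem supported_le_iff {S : Set (Fin n →₀ ℤ)} {N : Submodule F (Laur F n)} :
    AddMonoidAlgebra.supported F F S ≤ N ↔ ∀ a ∈ S, mono a 1 ∈ N := by
  rw [AddMonoidAlgebra.supported_eq_span_single, Submodule.span_le, Set.image_subset_iff]
  rfl

theorem polySub_eq_supported :
    polySub F n = AddMonoidAlgebra.supported F F {a : Fin n →₀ ℤ | 0 ≤ a} := by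
  rw [AddMonoidAlgebra.supported_eq_span_single, polySub]
  congr 1
  ext p
  exact ⟨fun ⟨a, h, e⟩ => ⟨a, h, e.symm⟩, fun ⟨a, h, e⟩ => ⟨a, h, e.symm⟩⟩

theorem mono_mem_polySub {a : Fin n →₀ ℤ} (ha : 0 ≤ a) (r : F) : mono a r ∈ polySub F n := by
  rw [polySub_eq_supported]
  exact mono_mem_supported ha r

theorem polySub_le_iff {N : Submodule F (Laur F n)} :
    polySub F n ≤ N ↔ ∀ a, 0 ≤ a → mono a 1 ∈ N := by
  rw [polySub_eq_supported, supported_le_iff]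
  rfl

/-- The polynomials of total degree less than `d`. The strict inequality makes `degreeLT F n 0`
trivial. -/
def degreeLT (F : Type*) [Field F] (n d : ℕ) : Submodule F (Laur F n) :=
  AddMonoidAlgebra.supported F F {a | 0 ≤ a ∧ ∑ i, a i < d}

theorem mono_mem_degreeLT {d : ℕ} {a : Fin n →₀ ℤ} (ha : 0 ≤ a) (hd : ∑ i, a i < d) (r : F) :
    mono a r ∈ degreeLT F n d :=
  mono_mem_supported (S := {a | 0 ≤ a ∧ ∑ i, a i < d}) ⟨ha, hd⟩ r

theorem degreeLT_le_iff {d : ℕ} {N : Submodule F (Laur F n)} :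
    degreeLT F n d ≤ N ↔ ∀ a : Fin n →₀ ℤ, 0 ≤ a → ∑ i, a i < d → mono a 1 ∈ N := by
  simp only [degreeLT, supported_le_iff, Set.mem_ofPred_eq, and_imp]

theorem degreeLT_le_polySub (d : ℕ) : degreeLT F n d ≤ polySub F n :=
  degreeLT_le_iff.mpr fun _ ha _ => mono_mem_polySub ha 1

theorem degreeLT_mono {d e : ℕ} (hde : d ≤ e) : degreeLT F n d ≤ degreeLT F n e :=
  degreeLT_le_iff.mpr fun _ ha hd =>
    mono_mem_degreeLT ha (hd.trans_le (by exact_mod_cast hde)) 1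

theorem degreeLT_zero : degreeLT F n 0 = ⊥ :=
  le_bot_iff.mp <| degreeLT_le_iff.mpr fun _ ha hd =>
    absurd (sum_nonneg_of_nonneg ha) (by simpa using hd)

theorem exists_mem_degreeLT {p : Laur F n} (hp : p ∈ polySub F n) : ∃ d, p ∈ degreeLT F n d := by
  rw [polySub_eq_supported, AddMonoidAlgebra.mem_supported] at hp
  refine ⟨p.coeff.support.sup (fun a => (∑ i, a i).toNat) + 1,
    AddMonoidAlgebra.mem_supported.mpr fun a ha => ⟨hp ha, ?_⟩⟩
  have hle := Finset.le_sup (f := fun a : Fin n →₀ ℤ => (∑ i, a i).toNat) ha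
  push_cast
  omega

theorem preserving_polySub_of_forall_degreeLT {f : Module.End F (Laur F n)}
    (hf : ∀ d, f ∈ preserving (degreeLT F n d)) : f ∈ preserving (polySub F n) := fun p hp => by
  obtain ⟨d, hd⟩ := exists_mem_degreeLT hp
  exact degreeLT_le_polySub d (hf d p hd)

instance finiteDimensional_degreeLT (d : ℕ) : FiniteDimensional F (degreeLT F n d) := by
  have hfin : {a : Fin n →₀ ℤ | 0 ≤ a ∧ ∑ i, a i < d}.Finite := by
    refine (Set.finite_Icc 0 (Finsupp.equivFunOnFinite.symm fun _ => (d : ℤ))).subset ?_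
    rintro a ⟨ha, hd⟩
    exact ⟨ha, fun i =>
      (Finset.single_le_sum (fun i _ => ha i) (Finset.mem_univ i)).trans hd.le⟩
  rw [degreeLT, AddMonoidAlgebra.supported_eq_span_single]
  exact FiniteDimensional.span_of_finite F (hfin.image _)

theorem one_mem_degreeLT_succ (d : ℕ) : (1 : Laur F n) ∈ degreeLT F n (d + 1) :=
  mono_mem_degreeLT (a := 0) le_rfl (by simp) 1

theorem Xel_mul_mem_degreeLT_succ {d : ℕ} (j : Fin n) {p : Laur F n} (hp : p ∈ degreeLT F n d) :
    Xel j * p ∈ degreeLT F n (d + 1) := by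
  refine (degreeLT_le_iff (N := (degreeLT F n (d + 1)).comap (mulOp (Xel j)))).mpr
    (fun a ha hd => ?_) hp
  rw [Submodule.mem_comap, mulOp, LinearMap.mulLeft_apply, Xel_mul_mono]
  refine mono_mem_degreeLT (single_one_add_nonneg ha j) ?_ 1
  rw [sum_single_add]
  push_cast
  omega

theorem Xel_mul_mem_polySub (j : Fin n) {p : Laur F n} (hp : p ∈ polySub F n) :
    Xel j * p ∈ polySub F n := by
  obtain ⟨d, hd⟩ := exists_mem_degreeLT hp
  exact degreeLT_le_polySub _ (Xel_mul_mem_degreeLT_succ j hd)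

theorem mem_degreeLT_of_Xel_mul_mem {d : ℕ} {j : Fin n} {p : Laur F n} (hp : p ∈ polySub F n)
    (h : Xel j * p ∈ degreeLT F n (d + 1)) : p ∈ degreeLT F n d := by
  rw [polySub_eq_supported, AddMonoidAlgebra.mem_supported] at hp
  refine AddMonoidAlgebra.mem_supported.mpr fun a ha => ⟨hp ha, ?_⟩
  have hcoeff : (Xel j * p).coeff (Finsupp.single j 1 + a) = p.coeff a := by
    rw [Xel, mono, AddMonoidAlgebra.coeff_single_mul_apply, one_mul, neg_add_cancel_left]
  have hdeg : ∑ i, (Finsupp.single j 1 + a : Fin n →₀ ℤ) i < ((d + 1 : ℕ) : ℤ) := by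
    refine (AddMonoidAlgebra.mem_supported.mp h ?_).2
    rwa [Finset.mem_coe, Finsupp.mem_support_iff, hcoeff, ← Finsupp.mem_support_iff]
  rw [sum_single_add] at hdeg
  push_cast at hdeg
  omega

theorem degreeLT_succ_le {d : ℕ} {N : Submodule F (Laur F n)} (h1 : 1 ∈ N)
    (hX : ∀ j, ∀ p ∈ degreeLT F n d, Xel j * p ∈ N) : degreeLT F n (d + 1) ≤ N := by
  refine degreeLT_le_iff.mpr fun a ha hd => ?_
  by_cases ha0 : a = 0
  · rwa [ha0, mono_zero_one]
  · obtain ⟨j, hj⟩ := DFunLike.ne_iff.mp ha0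
    obtain ⟨b, hb, rfl⟩ := exists_eq_single_add ha hj
    rw [← Xel_mul_mono]
    refine hX j _ (mono_mem_degreeLT hb ?_ 1)
    rw [sum_single_add] at hd
    push_cast at hd
    omega

theorem degreeLT_one : degreeLT F n 1 = Submodule.span F {1} := by
  refine le_antisymm (degreeLT_succ_le (Submodule.mem_span_singleton_self 1) fun j p hp => ?_)
    ((Submodule.span_singleton_le_iff_mem _ _).mpr (one_mem_degreeLT_succ 0))
  rw [degreeLT_zero, Submodule.mem_bot] at hp
  rw [hp, mul_zero]
  exact Submodule.zero_mem _

theorem polySub_le_of_one_mem {N : Submodule F (Laur F n)} (h1 : 1 ∈ N)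
    (hX : ∀ j, ∀ p ∈ N, Xel j * p ∈ N) : polySub F n ≤ N := fun p hp => by
  obtain ⟨d, hd⟩ := exists_mem_degreeLT hp
  suffices hle : degreeLT F n d ≤ N from hle hd
  clear hd
  induction d with
  | zero => rw [degreeLT_zero]; exact bot_le
  | succ d ih => exact degreeLT_succ_le h1 fun j p hp => hX j p (ih hp)

theorem exists_disjoint_degreeLT {V : Submodule F (Laur F n)} (hV : V ≤ polySub F n)
    (hV0 : V ≠ ⊥) : ∃ d, Disjoint V (degreeLT F n d) ∧ V ⊓ degreeLT F n (d + 1) ≠ ⊥ := by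
  classical
  obtain ⟨v, hv, hv0⟩ := Submodule.exists_mem_ne_zero_of_ne_bot hV0
  obtain ⟨e, he⟩ := exists_mem_degreeLT (hV hv)
  have hex : ∃ d, V ⊓ degreeLT F n d ≠ ⊥ :=
    ⟨e, (Submodule.ne_bot_iff _).mpr ⟨v, ⟨hv, he⟩, hv0⟩⟩
  have hpos : Nat.find hex ≠ 0 := fun h0 =>
    Nat.find_spec hex (by rw [h0, degreeLT_zero, inf_bot_eq])
  obtain ⟨d, hd⟩ := Nat.exists_eq_succ_of_ne_zero hpos
  refine ⟨d, disjoint_iff.mpr (not_not.mp (Nat.find_min hex ?_)), ?_⟩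
  · omega
  · rw [← Nat.succ_eq_add_one, ← hd]
    exact Nat.find_spec hex

theorem permVars_mem_degreeLT (w : Equiv.Perm (Fin n)) {d : ℕ} {p : Laur F n}
    (hp : p ∈ degreeLT F n d) : permVars w p ∈ degreeLT F n d := by
  refine (degreeLT_le_iff (N := (degreeLT F n d).comap (permVars w).toLinearMap)).mpr
    (fun a ha hd => ?_) hp
  rw [Submodule.mem_comap, AlgEquiv.toLinearMap_apply, permVars_mono]
  exact mono_mem_degreeLT (equivMapDomain_nonneg ha w) (by rwa [sum_equivMapDomain]) 1

theorem permVars_mem_polySub (w : Equiv.Perm (Fin n)) {p : Laur F n} (hp : p ∈ polySub F n) :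
    permVars w p ∈ polySub F n :=
  preserving_polySub_of_forall_degreeLT (f := (permVars w).toLinearMap)
    (fun _ _ hq => permVars_mem_degreeLT w hq) p hp

variable (F) in
/-- The polynomials divisible by `X_j`, that is `X_j · F[X_1, …, X_n]`. -/
def multiplesX (j : Fin n) : Submodule F (Laur F n) := (polySub F n).map (mulOp (Xel j))

theorem Xel_mul_mem_multiplesX (j : Fin n) {p : Laur F n} (hp : p ∈ polySub F n) :
    Xel j * p ∈ multiplesX F j :=
  ⟨p, hp, rfl⟩

theorem mem_polySub_of_Xel_mul_mem_multiplesX {j : Fin n} {p : Laur F n}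
    (h : Xel j * p ∈ multiplesX F j) : p ∈ polySub F n := by
  obtain ⟨r, hr, hrp⟩ := h
  rwa [← Xel_mul_left_cancel hrp]

end Filtration

section DemazureLusztig

variable {F : Type*} [Field F] {x y : Fin n}

theorem exists_Xel_swap_sub_Xel_eq_smul (x y j : Fin n) :
    ∃ c : F, Xel (Equiv.swap x y j) - Xel j = c • (Xel y - Xel x : Laur F n) := by
  rw [Equiv.swap_apply_def]
  split_ifs with hjx hjy
  · exact ⟨1, by rw [hjx, one_smul]⟩
  · exact ⟨-1, by rw [hjy, neg_one_smul, neg_sub]⟩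
  · exact ⟨0, by rw [sub_self, zero_smul]⟩

theorem exists_dividedDifference (x y : Fin n) {d : ℕ} {p : Laur F n}
    (hp : p ∈ degreeLT F n (d + 1)) :
    ∃ r ∈ degreeLT F n d, (Xel y - Xel x) * r = permVars (Equiv.swap x y) p - p := by
  induction d generalizing p with
  | zero =>
    rw [zero_add, degreeLT_one, Submodule.mem_span_singleton] at hp
    obtain ⟨c, rfl⟩ := hp
    exact ⟨0, Submodule.zero_mem _, by rw [map_smul, map_one, sub_self, mul_zero]⟩
  | succ d ih =>
    refine degreeLT_succ_le (N := ((degreeLT F n (d + 1)).map (mulOp (Xel y - Xel x))).comap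
      ((permVars (Equiv.swap x y)).toLinearMap - 1)) ?_ (fun j p hp => ?_) hp
    · exact ⟨0, Submodule.zero_mem _, by simp⟩
    · obtain ⟨r, hr, hrp⟩ := ih hp
      obtain ⟨c, hc⟩ := exists_Xel_swap_sub_Xel_eq_smul (F := F) x y j
      refine ⟨Xel (Equiv.swap x y j) * r + c • p,
        Submodule.add_mem _ (Xel_mul_mem_degreeLT_succ _ hr) (Submodule.smul_mem _ c hp), ?_⟩
      change (Xel y - Xel x) * (Xel (Equiv.swap x y j) * r + c • p) =
        permVars (Equiv.swap x y) (Xel j * p) - Xel j * p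
      rw [map_mul, permVars_Xel]
      rw [Algebra.smul_def] at hc ⊢
      linear_combination Xel (Equiv.swap x y j) * hrp - p * hc

/-- `T` is the Demazure–Lusztig operator with parameter `t` in the variables `X_x` and `X_y`. The
division by `X_y - X_x` in its definition is cleared. -/
def IsDemazureLusztig (t : F) (x y : Fin n) (T : Module.End F (Laur F n)) : Prop :=
  ∀ p, (Xel y - Xel x) * T p =
    (t⁻¹ • Xel y - t • Xel x) * permVars (Equiv.swap x y) p + (t - t⁻¹) • (Xel y * p)

namespace IsDemazureLusztig

variable {t : F} {T : Module.End F (Laur F n)}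

theorem apply_eq (hT : IsDemazureLusztig t x y T) (hxy : x ≠ y) {p r : Laur F n}
    (hr : (Xel y - Xel x) * r = permVars (Equiv.swap x y) p - p) :
    T p = t • permVars (Equiv.swap x y) p - (t - t⁻¹) • (Xel y * r) := by
  refine mul_left_cancel₀ (Xel_sub_Xel_ne_zero hxy) ?_
  rw [hT p]
  simp only [Algebra.smul_def, map_sub]
  linear_combination (algebraMap F _ t - algebraMap F _ t⁻¹) * Xel y * hr

theorem smul_inverse_apply_eq (hT : IsDemazureLusztig t x y T) (ht : t ≠ 0) (hxy : x ≠ y)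
    {p r : Laur F n} (hr : (Xel y - Xel x) * r = permVars (Equiv.swap x y) p - p) :
    t • (T p + (t⁻¹ - t) • p) =
      permVars (Equiv.swap x y) p + (1 - t ^ 2) • (Xel x * r) := by
  have htt : algebraMap F (Laur F n) t * algebraMap F _ t⁻¹ = 1 := by
    rw [← map_mul, mul_inv_cancel₀ ht, map_one]
  rw [hT.apply_eq hxy hr]
  simp only [Algebra.smul_def, map_sub, map_pow, map_one]
  linear_combination (Xel y * r + p) * htt + (1 - algebraMap F _ t ^ 2) * hr

theorem mem_preserving_degreeLT (hT : IsDemazureLusztig t x y T) (hxy : x ≠ y) (d : ℕ) :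
    T ∈ preserving (degreeLT F n d) := fun p hp => by
  cases d with
  | zero => rw [degreeLT_zero, Submodule.mem_bot] at hp ⊢; rw [hp, map_zero]
  | succ d =>
    obtain ⟨r, hr, hrp⟩ := exists_dividedDifference x y hp
    rw [hT.apply_eq hxy hrp]
    exact Submodule.sub_mem _ (Submodule.smul_mem _ _ (permVars_mem_degreeLT _ hp))
      (Submodule.smul_mem _ _ (Xel_mul_mem_degreeLT_succ y hr))

theorem apply_apply (hT : IsDemazureLusztig t x y T) (ht : t ≠ 0) (hxy : x ≠ y) (p : Laur F n) :
    T (T p) = (t - t⁻¹) • T p + p := by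
  have htt : algebraMap F (Laur F n) t * algebraMap F _ t⁻¹ = 1 := by
    rw [← map_mul, mul_inv_cancel₀ ht, map_one]
  have hp := hT p
  have hTp := hT (T p)
  have hswap := congrArg (permVars (Equiv.swap x y)) (hT p)
  simp only [map_add, map_sub, map_mul, map_smul, permVars_Xel, ← permVars_mul_apply,
    Equiv.swap_mul_self, permVars_one_apply, Equiv.swap_apply_left, Equiv.swap_apply_right]
    at hswap
  have hδ := Xel_sub_Xel_ne_zero (R := F) hxy
  refine mul_left_cancel₀ hδ (mul_left_cancel₀ hδ ?_)
  simp only [Algebra.smul_def, map_sub] at hp hTp hswap ⊢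
  set a := algebraMap F (Laur F n) t
  set b := algebraMap F (Laur F n) t⁻¹
  linear_combination (Xel y - Xel x) * hTp - (b * Xel y - a * Xel x) * hswap
    + (a - b) * Xel x * hp + (Xel y - Xel x) ^ 2 * p * htt

theorem sub_smul_mul_sub_smul_eq_zero (hT : IsDemazureLusztig t x y T) (ht : t ≠ 0)
    (hxy : x ≠ y) :
    (T + (t⁻¹ - t) • 1 - t⁻¹ • 1) * (T + (t⁻¹ - t) • 1 - (-t) • 1) = 0 := by
  refine LinearMap.ext fun p => ?_
  simp only [Module.End.mul_apply, LinearMap.sub_apply, LinearMap.add_apply, LinearMap.smul_apply,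
    Module.End.one_apply, LinearMap.zero_apply, map_add, map_sub, map_smul,
    hT.apply_apply ht hxy]
  match_scalars
  · ring
  · field_simp; ring

end IsDemazureLusztig

end DemazureLusztig

section Rotation

variable {F : Type*} [Field F] [NeZero n]

variable (n) in
/-- The index of the last variable. -/
def lastVar : Fin n := ⟨n - 1, Nat.sub_one_lt (NeZero.ne n)⟩

theorem cycleRange_lastVar : Fin.cycleRange (lastVar n) = finRotate n := by
  obtain ⟨m, rfl⟩ := Nat.exists_eq_succ_of_ne_zero (NeZero.ne n)
  exact Fin.cycleRange_last m

theorem finRotate_symm_zero : (finRotate n).symm 0 = lastVar n := by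
  rw [← cycleRange_lastVar, Fin.cycleRange_symm_zero]

theorem cycleRange_succ {i : ℕ} (hi : i + 1 < n) :
    Fin.cycleRange ⟨i + 1, hi⟩ = Fin.cycleRange ⟨i, Nat.lt_of_succ_lt hi⟩ *
      Equiv.swap ⟨i, Nat.lt_of_succ_lt hi⟩ ⟨i + 1, hi⟩ := by
  have hlt : (⟨i, Nat.lt_of_succ_lt hi⟩ : Fin n) < ⟨i + 1, hi⟩ := Fin.mk_lt_mk.mpr i.lt_succ_self
  ext j
  rw [Equiv.Perm.mul_apply]
  obtain hji | rfl | rfl | hji : j < ⟨i, Nat.lt_of_succ_lt hi⟩ ∨ j = ⟨i, Nat.lt_of_succ_lt hi⟩ ∨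
      j = ⟨i + 1, hi⟩ ∨ ⟨i + 1, hi⟩ < j := by
    simp only [Fin.lt_def, Fin.ext_iff]; omega
  · rw [Equiv.swap_apply_of_ne_of_ne hji.ne (hji.trans hlt).ne,
      Fin.coe_cycleRange_of_lt (hji.trans hlt), Fin.coe_cycleRange_of_lt hji]
  · rw [Equiv.swap_apply_left, Fin.coe_cycleRange_of_lt hlt, Fin.cycleRange_of_gt hlt]
  · rw [Equiv.swap_apply_right, Fin.cycleRange_self, Fin.cycleRange_self]
  · rw [Equiv.swap_apply_of_ne_of_ne (hlt.trans hji).ne' hji.ne', Fin.cycleRange_of_gt hji,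
      Fin.cycleRange_of_gt (hlt.trans hji)]

/-- `π` permutes the variables cyclically, picking up a factor `q` for every factor `X_0` of a
monomial; this is the operator written `π⁻¹` in the usual notation. -/
def IsTwistedRotation (q : F) (π : Module.End F (Laur F n)) : Prop :=
  ∀ v r, π (mono v r) = q ^ v 0 • mono (Finsupp.equivMapDomain (finRotate n).symm v) r

namespace IsTwistedRotation

variable {q : F} {π : Module.End F (Laur F n)}

theorem mem_preserving_degreeLT (hπ : IsTwistedRotation q π) (d : ℕ) :
    π ∈ preserving (degreeLT F n d) := fun p hp => by
  refine degreeLT_le_iff (N := (degreeLT F n d).comap π).mpr (fun a ha hd => ?_) hp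
  rw [Submodule.mem_comap, hπ]
  refine Submodule.smul_mem _ _ (mono_mem_degreeLT (equivMapDomain_nonneg ha _) ?_ 1)
  rwa [sum_equivMapDomain]

theorem Xel_zero_mul (hπ : IsTwistedRotation q π) (hq : q ≠ 0) (p : Laur F n) :
    π (Xel 0 * p) = q • (Xel (lastVar n) * π p) := by
  have h : π * mulOp (Xel 0) = q • (mulOp (Xel (lastVar n)) * π) := end_ext fun a r => by
    change π (Xel 0 * mono a r) = q • (Xel (lastVar n) * π (mono a r))
    have hperm (p : Laur F n) : permVars (finRotate n).symm (Xel 0 * p) =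
        Xel (lastVar n) * permVars (finRotate n).symm p := by
      rw [map_mul, permVars_Xel, finRotate_symm_zero]
    rw [hπ, mul_smul_comm, ← permVars_mono, ← hperm, Xel_mul_mono, hπ, permVars_mono, smul_smul,
      Finsupp.add_apply, Finsupp.single_eq_same, zpow_one_add₀ hq]
  exact LinearMap.congr_fun h p

theorem map_mem_multiplesX (hπ : IsTwistedRotation q π) (hq : q ≠ 0) {p : Laur F n}
    (hp : p ∈ multiplesX F 0) : π p ∈ multiplesX F (lastVar n) := by
  obtain ⟨r, hr, rfl⟩ := hp
  rw [mulOp, LinearMap.mulLeft_apply, hπ.Xel_zero_mul hq]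
  exact Submodule.smul_mem _ q (Xel_mul_mem_multiplesX _
    (preserving_polySub_of_forall_degreeLT hπ.mem_preserving_degreeLT r hr))

theorem permVars_finRotate_smodEq (hπ : IsTwistedRotation q π) {p : Laur F n}
    (hp : p ∈ polySub F n) :
    π (permVars (finRotate n) p) ≡ p [SMOD multiplesX F (lastVar n)] := by
  suffices h : polySub F n ≤ (multiplesX F (lastVar n)).comap
      (π * (permVars (finRotate n)).toLinearMap - 1) from SModEq.sub_mem.mpr (h hp)
  refine polySub_le_iff.mpr fun a ha => ?_
  have hval : π (permVars (finRotate n) (mono a 1)) = q ^ a (lastVar n) • mono a 1 := by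
    rw [permVars_mono, hπ, Finsupp.equivMapDomain_apply, finRotate_symm_zero,
      ← Finsupp.equivMapDomain_trans, Equiv.self_trans_symm, Finsupp.equivMapDomain_refl]
  change π (permVars (finRotate n) (mono a 1)) - mono a 1 ∈ multiplesX F (lastVar n)
  rw [hval]
  by_cases h0 : a (lastVar n) = 0
  · rw [h0, zpow_zero, one_smul, sub_self]
    exact Submodule.zero_mem _
  · obtain ⟨b, hb, rfl⟩ := exists_eq_single_add ha h0
    rw [← Xel_mul_mono]
    have hmem := Xel_mul_mem_multiplesX (lastVar n) (mono_mem_polySub hb (1 : F))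
    exact Submodule.sub_mem _ (Submodule.smul_mem _ _ hmem) hmem

theorem pow_apply_mono (hπ : IsTwistedRotation q π) (hq : q ≠ 0) (k : ℕ) (v : Fin n →₀ ℤ)
    (r : F) :
    (π ^ k) (mono v r) = q ^ (∑ j ∈ Finset.range k, v (Fin.ofNat n j)) •
      mono (Finsupp.equivMapDomain (Equiv.subRight (Fin.ofNat n k)) v) r := by
  induction k with
  | zero =>
    have hrefl : Equiv.subRight (Fin.ofNat n 0) = Equiv.refl (Fin n) := Equiv.ext sub_zero
    rw [pow_zero, Module.End.one_apply, Finset.sum_range_zero, zpow_zero, one_smul, hrefl,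
      Finsupp.equivMapDomain_refl]
  | succ k ih =>
    have hval : (Equiv.subRight (Fin.ofNat n k)).symm 0 = Fin.ofNat n k := by
      rw [Equiv.symm_apply_eq, Equiv.subRight_apply, sub_self]
    have htrans : (Equiv.subRight (Fin.ofNat n k)).trans (finRotate n).symm =
        Equiv.subRight (Fin.ofNat n (k + 1)) := Equiv.ext fun j => by
      have hsucc : Fin.ofNat n (k + 1) = Fin.ofNat n k + 1 := by
        ext
        simp [Fin.val_add]
      rw [Equiv.trans_apply, finRotate_symm_apply, Equiv.subRight_apply, Equiv.subRight_apply,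
        hsucc, sub_sub]
    rw [pow_succ', Module.End.mul_apply, ih, map_smul, hπ, smul_smul, Finset.sum_range_succ,
      zpow_add₀ hq, Finsupp.equivMapDomain_apply, hval, ← Finsupp.equivMapDomain_trans, htrans]

theorem pow_card_apply_mono (hπ : IsTwistedRotation q π) (hq : q ≠ 0) (v : Fin n →₀ ℤ) (r : F) :
    (π ^ n) (mono v r) = q ^ (∑ j, v j) • mono v r := by
  have hsub : Equiv.subRight (Fin.ofNat n n) = Equiv.refl (Fin n) := Equiv.ext fun j => by
    rw [Equiv.subRight_apply, Fin.ofNat_self, sub_zero, Equiv.refl_apply]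
  rw [hπ.pow_apply_mono hq, hsub, Finsupp.equivMapDomain_refl, Finset.sum_range]
  simp only [Fin.ofNat_val_eq_self]

theorem pow_card_sub_smul_mem_degreeLT (hπ : IsTwistedRotation q π) (hq : q ≠ 0) {d : ℕ}
    {p : Laur F n} (hp : p ∈ degreeLT F n (d + 1)) :
    (π ^ n) p - q ^ d • p ∈ degreeLT F n d := by
  suffices h : degreeLT F n (d + 1) ≤ (degreeLT F n d).comap (π ^ n - q ^ d • 1) from h hp
  refine degreeLT_le_iff.mpr fun a ha hd => ?_
  change (π ^ n) (mono a 1) - q ^ d • mono a 1 ∈ degreeLT F n d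
  rw [hπ.pow_card_apply_mono hq]
  obtain hlt | heq : ∑ i, a i < d ∨ ∑ i, a i = d := by push_cast at hd; omega
  · have hmem := mono_mem_degreeLT ha hlt (1 : F)
    exact Submodule.sub_mem _ (Submodule.smul_mem _ _ hmem) (Submodule.smul_mem _ _ hmem)
  · rw [heq, zpow_natCast, sub_self]
    exact Submodule.zero_mem _

end IsTwistedRotation

end Rotation

section PolynomialRep

variable {F : Type*} [Field F] [NeZero n]

/-- The operators of the representation on Laurent polynomials with parameters `t` and `q`:
Demazure–Lusztig operators `T k` with inverses `Tinv k`, the twisted rotation `π`, the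
renormalised `Y i` (written `Y'_i` in the paper) with inverses `Yinv i`, and the lowering
operators `D i` (written `D'_i`). Indices start from `0`, so the last variable is `n - 1`. -/
structure IsPolynomialRep (t q : F) (T Tinv : ℕ → Module.End F (Laur F n))
    (π : Module.End F (Laur F n)) (Y Yinv D : ℕ → Module.End F (Laur F n)) : Prop where
  demazureLusztig : ∀ k (hk : k + 1 < n),
    IsDemazureLusztig t ⟨k, Nat.lt_of_succ_lt hk⟩ ⟨k + 1, hk⟩ (T k)
  Tinv_eq : ∀ k, Tinv k = T k + (t⁻¹ - t) • 1
  rotation : IsTwistedRotation q π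
  Y_eq : ∀ i, Y i = t ^ (n - 1) • (aF T i (n - 1 - i) * π * aF Tinv 0 i)
  Y_mul_Yinv : ∀ i, i < n → Y i * Yinv i = 1 ∧ Yinv i * Y i = 1
  D_eq : ∀ i, D i = aF T i (n - 1 - i) *
    ((q - q⁻¹)⁻¹ • (XinvOp (n - 1) * (Y (n - 1) - Yinv (n - 1)))) * dF T i (n - 1 - i)

namespace IsPolynomialRep

variable {t q : F} {T Tinv Y Yinv D : ℕ → Module.End F (Laur F n)} {π : Module.End F (Laur F n)}

theorem T_mem_preserving_degreeLT (h : IsPolynomialRep t q T Tinv π Y Yinv D) {k : ℕ}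
    (hk : k + 1 < n) (d : ℕ) : T k ∈ preserving (degreeLT F n d) :=
  (h.demazureLusztig k hk).mem_preserving_degreeLT (Fin.mk_lt_mk.mpr k.lt_succ_self).ne d

theorem Tinv_mem_preserving (h : IsPolynomialRep t q T Tinv π Y Yinv D)
    {U : Submodule F (Laur F n)} {k : ℕ} (hT : T k ∈ preserving U) : Tinv k ∈ preserving U := by
  rw [h.Tinv_eq]
  exact add_mem hT (Subalgebra.smul_mem _ (one_mem _) _)

theorem Y_mem_preserving_degreeLT (h : IsPolynomialRep t q T Tinv π Y Yinv D) {i : ℕ}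
    (hi : i < n) (d : ℕ) : Y i ∈ preserving (degreeLT F n d) := by
  rw [h.Y_eq]
  refine Subalgebra.smul_mem _ (mul_mem (mul_mem ?_ (h.rotation.mem_preserving_degreeLT d)) ?_) _
  · exact aF_mem fun k _ hk => h.T_mem_preserving_degreeLT (by omega) d
  · exact aF_mem fun k _ hk =>
      h.Tinv_mem_preserving (h.T_mem_preserving_degreeLT (by omega) d)

theorem Yinv_mem_preserving_degreeLT (h : IsPolynomialRep t q T Tinv π Y Yinv D) {i : ℕ}
    (hi : i < n) (d : ℕ) : Yinv i ∈ preserving (degreeLT F n d) :=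
  mem_preserving_of_mul_eq_one (h.Y_mul_Yinv i hi).2 (h.Y_mem_preserving_degreeLT hi d)

theorem T_mem_preserving_polySub (h : IsPolynomialRep t q T Tinv π Y Yinv D) {k : ℕ}
    (hk : k + 1 < n) : T k ∈ preserving (polySub F n) :=
  preserving_polySub_of_forall_degreeLT (h.T_mem_preserving_degreeLT hk)

theorem Y_mem_preserving_polySub (h : IsPolynomialRep t q T Tinv π Y Yinv D) {i : ℕ}
    (hi : i < n) : Y i ∈ preserving (polySub F n) :=
  preserving_polySub_of_forall_degreeLT (h.Y_mem_preserving_degreeLT hi)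

theorem Yinv_mem_preserving_polySub (h : IsPolynomialRep t q T Tinv π Y Yinv D) {i : ℕ}
    (hi : i < n) : Yinv i ∈ preserving (polySub F n) :=
  preserving_polySub_of_forall_degreeLT (h.Yinv_mem_preserving_degreeLT hi)

theorem exists_smul_Tinv_apply_eq (h : IsPolynomialRep t q T Tinv π Y Yinv D) (ht : t ≠ 0) {k : ℕ}
    (hk : k + 1 < n) {p : Laur F n} (hp : p ∈ polySub F n) :
    ∃ r ∈ polySub F n, t • Tinv k p =
      permVars (Equiv.swap ⟨k, Nat.lt_of_succ_lt hk⟩ ⟨k + 1, hk⟩) p +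
        Xel ⟨k, Nat.lt_of_succ_lt hk⟩ * r := by
  obtain ⟨d, hd⟩ := exists_mem_degreeLT hp
  obtain ⟨r, hr, hrp⟩ := exists_dividedDifference ⟨k, Nat.lt_of_succ_lt hk⟩ ⟨k + 1, hk⟩
    (degreeLT_mono d.le_succ hd)
  refine ⟨(1 - t ^ 2) • r, Submodule.smul_mem _ _ (degreeLT_le_polySub d hr), ?_⟩
  rw [h.Tinv_eq, mul_smul_comm]
  exact (h.demazureLusztig k hk).smul_inverse_apply_eq ht (Fin.mk_lt_mk.mpr k.lt_succ_self).ne hrp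

theorem smul_aF_Tinv_smodEq (h : IsPolynomialRep t q T Tinv π Y Yinv D) (ht : t ≠ 0) {i : ℕ}
    (hi : i < n) {p : Laur F n} (hp : p ∈ polySub F n) :
    t ^ i • aF Tinv 0 i p ≡ permVars (Fin.cycleRange ⟨i, hi⟩) p [SMOD multiplesX F 0] := by
  induction i generalizing p with
  | zero =>
    rw [pow_zero, one_smul, aF_len_zero, Module.End.one_apply, Fin.cycleRange_mk_zero,
      permVars_one_apply]
  | succ i ih =>
    obtain ⟨r, hr, hTp⟩ := h.exists_smul_Tinv_apply_eq ht hi hp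
    have hmem : t • Tinv i p ∈ polySub F n := by
      rw [hTp]
      exact add_mem (permVars_mem_polySub _ hp) (Xel_mul_mem_polySub _ hr)
    calc t ^ (i + 1) • aF Tinv 0 (i + 1) p
        = t ^ i • aF Tinv 0 i (t • Tinv i p) := by
          rw [aF_len_succ, zero_add, Module.End.mul_apply, map_smul, smul_smul, pow_succ]
      _ ≡ permVars (Fin.cycleRange ⟨i, Nat.lt_of_succ_lt hi⟩) (t • Tinv i p)
            [SMOD multiplesX F 0] := ih _ hmem
      _ = permVars (Fin.cycleRange ⟨i + 1, hi⟩) p +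
            Xel 0 * permVars (Fin.cycleRange ⟨i, Nat.lt_of_succ_lt hi⟩) r := by
          rw [hTp, map_add, map_mul, permVars_Xel, Fin.cycleRange_self, ← permVars_mul_apply,
            ← cycleRange_succ]
      _ ≡ permVars (Fin.cycleRange ⟨i + 1, hi⟩) p [SMOD multiplesX F 0] :=
          SModEq.sub_mem.mpr (by
            rw [add_sub_cancel_left]
            exact Xel_mul_mem_multiplesX 0 (permVars_mem_polySub _ hr))

theorem Y_last_eq (h : IsPolynomialRep t q T Tinv π Y Yinv D) :
    Y (n - 1) = t ^ (n - 1) • (π * aF Tinv 0 (n - 1)) := by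
  rw [h.Y_eq, Nat.sub_self, aF_len_zero, one_mul]

theorem Y_last_smodEq (h : IsPolynomialRep t q T Tinv π Y Yinv D) (ht : t ≠ 0) (hq : q ≠ 0)
    {p : Laur F n} (hp : p ∈ polySub F n) :
    Y (n - 1) p ≡ p [SMOD multiplesX F (lastVar n)] := by
  have hcycle : t ^ (n - 1) • aF Tinv 0 (n - 1) p ≡ permVars (finRotate n) p
      [SMOD multiplesX F 0] := by
    rw [← cycleRange_lastVar]
    exact h.smul_aF_Tinv_smodEq ht (lastVar n).2 hp
  have hπ := h.rotation.map_mem_multiplesX hq (SModEq.sub_mem.mp hcycle)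
  rw [map_sub, map_smul] at hπ
  rw [h.Y_last_eq]
  exact (SModEq.sub_mem.mpr hπ).trans (h.rotation.permVars_finRotate_smodEq hp)

theorem Xel_mul_D_last (h : IsPolynomialRep t q T Tinv π Y Yinv D) (p : Laur F n) :
    Xel (lastVar n) * D (n - 1) p = (q - q⁻¹)⁻¹ • (Y (n - 1) p - Yinv (n - 1) p) := by
  have hX : XinvOp (n - 1) = mulOp (XinvEl (lastVar n) : Laur F n) := dif_pos (lastVar n).2
  have hD : D (n - 1) p =
      (q - q⁻¹)⁻¹ • (XinvEl (lastVar n) * (Y (n - 1) p - Yinv (n - 1) p)) := by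
    rw [h.D_eq, Nat.sub_self, aF_len_zero, dF_len_zero, one_mul, mul_one, hX]
    rfl
  rw [hD, mul_smul_comm, ← mul_assoc, Xel_mul_XinvEl, one_mul]

theorem D_last_mem_preserving_polySub (h : IsPolynomialRep t q T Tinv π Y Yinv D) (ht : t ≠ 0)
    (hq : q ≠ 0) : D (n - 1) ∈ preserving (polySub F n) := fun p hp => by
  have hl : n - 1 < n := (lastVar n).2
  have hYinv : p ≡ Yinv (n - 1) p [SMOD multiplesX F (lastVar n)] := by
    have hY := h.Y_last_smodEq ht hq (h.Yinv_mem_preserving_polySub hl p hp)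
    rwa [← Module.End.mul_apply, (h.Y_mul_Yinv _ hl).1] at hY
  refine mem_polySub_of_Xel_mul_mem_multiplesX (j := lastVar n) ?_
  rw [h.Xel_mul_D_last]
  exact Submodule.smul_mem _ _ (SModEq.sub_mem.mp ((h.Y_last_smodEq ht hq hp).trans hYinv))

theorem D_mem_preserving_polySub (h : IsPolynomialRep t q T Tinv π Y Yinv D) (ht : t ≠ 0)
    (hq : q ≠ 0) (i : ℕ) : D i ∈ preserving (polySub F n) := by
  have hlast := h.D_last_mem_preserving_polySub ht hq
  rw [h.D_eq, Nat.sub_self, aF_len_zero, dF_len_zero, one_mul, mul_one] at hlast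
  rw [h.D_eq]
  exact mul_mem (mul_mem (aF_mem fun k _ hk => h.T_mem_preserving_polySub (by omega)) hlast)
    (dF_mem fun k _ hk => h.T_mem_preserving_polySub (by omega))

theorem D_last_mem_degreeLT (h : IsPolynomialRep t q T Tinv π Y Yinv D) (ht : t ≠ 0)
    (hq : q ≠ 0) {d : ℕ} {p : Laur F n} (hp : p ∈ degreeLT F n (d + 1)) :
    D (n - 1) p ∈ degreeLT F n d := by
  refine mem_degreeLT_of_Xel_mul_mem (j := lastVar n)
    (h.D_last_mem_preserving_polySub ht hq p (degreeLT_le_polySub _ hp)) ?_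
  rw [h.Xel_mul_D_last]
  exact Submodule.smul_mem _ _
    (Submodule.sub_mem _ (h.Y_mem_preserving_degreeLT (lastVar n).2 _ p hp)
      (h.Yinv_mem_preserving_degreeLT (lastVar n).2 _ p hp))

theorem Y_last_Y_last_eq_self (h : IsPolynomialRep t q T Tinv π Y Yinv D) (hqq : q - q⁻¹ ≠ 0)
    {p : Laur F n} (hp : D (n - 1) p = 0) : Y (n - 1) (Y (n - 1) p) = p := by
  have hX := h.Xel_mul_D_last p
  rw [hp, mul_zero, eq_comm, smul_eq_zero, sub_eq_zero] at hX
  rw [hX.resolve_left (inv_ne_zero hqq), ← Module.End.mul_apply,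
    (h.Y_mul_Yinv (n - 1) (lastVar n).2).1, Module.End.one_apply]

theorem Tinv_mem_preservingDet (h : IsPolynomialRep t q T Tinv π Y Yinv D) (ht : t ≠ 0)
    {U : Submodule F (Laur F n)} [FiniteDimensional F U] {k : ℕ} (hk : k + 1 < n)
    (hT : T k ∈ preserving U) : Tinv k ∈ preservingDet U (sqrtZPowers (Units.mk0 t ht)) := by
  refine mem_preservingDet_of_sub_smul_mul_sub_smul_eq_zero
    (inv_mem (self_mem_sqrtZPowers (Units.mk0 t ht))) (neg_self_mem_sqrtZPowers _)
    (h.Tinv_mem_preserving hT) ?_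
  rw [h.Tinv_eq, Units.val_neg, Units.val_inv_eq_inv_val, Units.val_mk0]
  exact (h.demazureLusztig k hk).sub_smul_mul_sub_smul_eq_zero ht
    (Fin.mk_lt_mk.mpr k.lt_succ_self).ne

theorem π_mem_preservingDet (h : IsPolynomialRep t q T Tinv π Y Yinv D) (ht : t ≠ 0)
    {U : Submodule F (Laur F n)} [FiniteDimensional F U]
    (hT : ∀ k, k + 1 < n → T k ∈ preserving U) (hY : Y (n - 1) ∈ preserving U)
    (hYY : ∀ p ∈ U, Y (n - 1) (Y (n - 1) p) = p) :
    π ∈ preservingDet U (sqrtZPowers (Units.mk0 t ht)) := by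
  set τ := Units.mk0 t ht
  refine mem_preservingDet_of_mul_mem (g := aF Tinv 0 (n - 1)) ?_
    (aF_mem fun k _ hk => h.Tinv_mem_preservingDet ht (by omega) (hT k (by omega)))
  have hmul : π * aF Tinv 0 (n - 1) = ((τ ^ (n - 1))⁻¹ : Fˣ) • Y (n - 1) := by
    rw [h.Y_last_eq, eq_inv_smul_iff]
    rfl
  rw [hmul]
  exact smul_mem_preservingDet (inv_mem (pow_mem (self_mem_sqrtZPowers τ) _))
    (mem_preservingDet_sqrtZPowers_of_involutive hY hYY)

theorem exists_pow_mul_finrank_eq_zpow (h : IsPolynomialRep t q T Tinv π Y Yinv D) (ht : t ≠ 0)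
    (hq : q ≠ 0) (hqq : q - q⁻¹ ≠ 0) {d : ℕ} {U : Submodule F (Laur F n)} [FiniteDimensional F U]
    (hUd : U ≤ degreeLT F n (d + 1)) (hdisj : Disjoint U (degreeLT F n d))
    (hT : ∀ k, k + 1 < n → T k ∈ preserving U) (hY : Y (n - 1) ∈ preserving U)
    (hD : D (n - 1) ∈ preserving U) :
    ∃ z : ℤ, q ^ (d * (Module.finrank F U * 2)) = t ^ z := by
  have hYY : ∀ p ∈ U, Y (n - 1) (Y (n - 1) p) = p := fun p hp =>
    h.Y_last_Y_last_eq_self hqq <|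
      Submodule.disjoint_def.mp hdisj _ (hD p hp) (h.D_last_mem_degreeLT ht hq (hUd hp))
  have hπ := pow_mem (h.π_mem_preservingDet ht hT hY hYY) n
  have hscalar : ∀ p ∈ U, (π ^ n) p = q ^ d • p := fun p hp =>
    sub_eq_zero.mp <| Submodule.disjoint_def.mp hdisj _
      (U.sub_mem (hπ.1 p hp) (U.smul_mem _ hp))
      (h.rotation.pow_card_sub_smul_mem_degreeLT hq (hUd hp))
  obtain ⟨z, hz⟩ := exists_pow_finrank_eq_zpow_of_mem_preservingDet hπ hscalar
  exact ⟨z, by rw [pow_mul, hz, Units.val_mk0]⟩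

theorem one_mem_of_mem_preserving (h : IsPolynomialRep t q T Tinv π Y Yinv D) (ht : t ≠ 0)
    (hq : q ≠ 0) (hqt : ∀ m : ℕ, m ≠ 0 → ∀ z : ℤ, q ^ m ≠ t ^ z) {V : Submodule F (Laur F n)}
    (hV : V ≤ polySub F n) (hV0 : V ≠ ⊥) (hT : ∀ k, k + 1 < n → T k ∈ preserving V)
    (hY : Y (n - 1) ∈ preserving V) (hD : D (n - 1) ∈ preserving V) : 1 ∈ V := by
  obtain ⟨d, hdisj, hU0⟩ := exists_disjoint_degreeLT hV hV0
  have : FiniteDimensional F ↥(V ⊓ degreeLT F n (d + 1)) :=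
    Submodule.finiteDimensional_of_le inf_le_right
  have hqq : q - q⁻¹ ≠ 0 := fun h0 => hqt 2 two_ne_zero 0 <| by
    rw [zpow_zero, sq, mul_eq_one_iff_eq_inv₀ hq]
    exact sub_eq_zero.mp h0
  have hDd : D (n - 1) ∈ preserving (degreeLT F n (d + 1)) := fun p hp =>
    degreeLT_mono d.le_succ (h.D_last_mem_degreeLT ht hq hp)
  obtain ⟨z, hz⟩ := h.exists_pow_mul_finrank_eq_zpow ht hq hqq inf_le_right
    (hdisj.mono_left inf_le_left)
    (fun k hk => preserving_inf_le _ _ ⟨hT k hk, h.T_mem_preserving_degreeLT hk _⟩)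
    (preserving_inf_le _ _ ⟨hY, h.Y_mem_preserving_degreeLT (lastVar n).2 _⟩)
    (preserving_inf_le _ _ ⟨hD, hDd⟩)
  obtain rfl : d = 0 := by
    by_contra hd
    have hdim := Submodule.finrank_eq_zero.not.mpr hU0
    exact hqt _ (mul_ne_zero hd (mul_ne_zero hdim two_ne_zero)) z hz
  obtain ⟨v, ⟨hv, hv1⟩, hv0⟩ := Submodule.exists_mem_ne_zero_of_ne_bot hU0
  rw [zero_add, SetLike.mem_coe, degreeLT_one, Submodule.mem_span_singleton] at hv1
  obtain ⟨c, rfl⟩ := hv1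
  exact (V.smul_mem_iff (left_ne_zero_of_smul hv0)).mp hv

theorem eq_bot_or_eq_polySub (h : IsPolynomialRep t q T Tinv π Y Yinv D) (ht : t ≠ 0)
    (hq : q ≠ 0) (hqt : ∀ m : ℕ, m ≠ 0 → ∀ z : ℤ, q ^ m ≠ t ^ z) {V : Submodule F (Laur F n)}
    (hV : V ≤ polySub F n) (hT : ∀ k, k + 1 < n → T k ∈ preserving V)
    (hX : ∀ j, ∀ p ∈ V, Xel j * p ∈ V) (hY : Y (n - 1) ∈ preserving V)
    (hD : D (n - 1) ∈ preserving V) : V = ⊥ ∨ V = polySub F n :=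
  or_iff_not_imp_left.mpr fun hV0 => le_antisymm hV <|
    polySub_le_of_one_mem (h.one_mem_of_mem_preserving ht hq hqt hV hV0 hT hY hD) hX

end IsPolynomialRep

end PolynomialRep

theorem XOp_apply {i : ℕ} (hi : i < n) (p : Laur R n) : XOp i p = Xel ⟨i, hi⟩ * p := by
  rw [XOp, dif_pos hi, mulOp, LinearMap.mulLeft_apply]

end Laur

theorem algebraMap_pow_ne_ratFuncX_zpow {K : Type*} [Field K] {c : K} {m : ℕ} (hc : c ^ m ≠ 1)
    (z : ℤ) : algebraMap K (RatFunc K) c ^ m ≠ RatFunc.X ^ z := by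
  have hdeg (k : ℕ) : ((RatFunc.X : RatFunc K) ^ k).intDegree = k := by
    rw [← RatFunc.algebraMap_X, ← map_pow, RatFunc.intDegree_polynomial,
      Polynomial.natDegree_X_pow]
  have hzdeg : ((RatFunc.X : RatFunc K) ^ z).intDegree = z := by
    obtain ⟨k, rfl | rfl⟩ := z.eq_nat_or_neg
    · rw [zpow_natCast, hdeg]
    · rw [zpow_neg, zpow_natCast, RatFunc.intDegree_inv, hdeg]
  rw [← map_pow]
  intro h
  obtain rfl : z = 0 := by rw [← hzdeg, ← h, RatFunc.algebraMap_eq_C, RatFunc.intDegree_C]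
  rw [zpow_zero, map_eq_one_iff _ (algebraMap K (RatFunc K)).injective] at h
  exact hc h

theorem statement14_general {F : Type*} [Field F] {n : ℕ} [NeZero n] {t q : F} (ht : t ≠ 0)
    (hq : q ≠ 0) (hqt : ∀ m : ℕ, m ≠ 0 → ∀ z : ℤ, q ^ m ≠ t ^ z)
    {T Tinv Y Yinv D : ℕ → Module.End F (Laur F n)} {π : Module.End F (Laur F n)}
    (h : Laur.IsPolynomialRep t q T Tinv π Y Yinv D) :
    ((∀ k : ℕ, k + 1 < n → ∀ p ∈ polySub F n, T k p ∈ polySub F n) ∧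
      (∀ i : ℕ, i < n → ∀ p ∈ polySub F n, XOp i p ∈ polySub F n ∧ Y i p ∈ polySub F n ∧
        Yinv i p ∈ polySub F n ∧ D i p ∈ polySub F n)) ∧
    (∀ V : Submodule F (Laur F n), V ≤ polySub F n →
      (∀ k : ℕ, k + 1 < n → ∀ p ∈ V, T k p ∈ V) →
      (∀ i : ℕ, i < n → ∀ p ∈ V, XOp i p ∈ V ∧ Y i p ∈ V ∧ Yinv i p ∈ V ∧ D i p ∈ V) →
      V = ⊥ ∨ V = polySub F n) := by
  refine ⟨⟨fun k hk => h.T_mem_preserving_polySub hk, fun i hi p hp =>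
    ⟨?_, h.Y_mem_preserving_polySub hi p hp, h.Yinv_mem_preserving_polySub hi p hp,
      h.D_mem_preserving_polySub ht hq i p hp⟩⟩, fun V hV hT hV' => ?_⟩
  · rw [Laur.XOp_apply hi]
    exact Laur.Xel_mul_mem_polySub _ hp
  · have hl : n - 1 < n := (Laur.lastVar n).2
    refine h.eq_bot_or_eq_polySub ht hq hqt hV hT (fun j p hp => ?_)
      (fun p hp => (hV' _ hl p hp).2.1) (fun p hp => (hV' _ hl p hp).2.2.2)
    rw [← Laur.XOp_apply j.2]
    exact (hV' j j.2 p hp).1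

/-- Over `F = ℂ(τ)` (realised as `RatFunc ℂ`), the operators `T_k`, `X_i`,
`Y'_i = τ^{n-1} Y_i`, `(Y'_i)⁻¹` and `D'_i` map the polynomial subring `P ⊆ L` into itself,
and the only invariant `F`-subspaces `V ⊆ P` are `{0}` and `P`. -/
theorem statement14
    (n : ℕ) [NeZero n]
    (q₀ : ℂ) (hq₀ : q₀ ≠ 0) (hq₀root : ∀ m : ℕ, m ≠ 0 → q₀ ^ m ≠ 1)
    -- the action of the symmetric group permuting the variables
    (W : Equiv.Perm (Fin n) → Module.End (RatFunc ℂ) (Laur (RatFunc ℂ) n))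
    (hW : ∀ (w : Equiv.Perm (Fin n)) (v : Fin n →₀ ℤ) (r : (RatFunc ℂ)),
      W w (mono v r) = mono (Finsupp.equivMapDomain w v) r)
    -- the Demazure–Lusztig operators `T_k` and their inverses `Ti k = T k + τ⁻¹ - τ`
    (T Ti : ℕ → Module.End (RatFunc ℂ) (Laur (RatFunc ℂ) n))
    (hT : ∀ (k : ℕ) (hk : k + 1 < n) (p : Laur (RatFunc ℂ) n),
      (Xel ⟨k + 1, hk⟩ - Xel ⟨k, Nat.lt_of_succ_lt hk⟩) * T k p
        = ((RatFunc.X : RatFunc ℂ)⁻¹ • Xel ⟨k + 1, hk⟩ - (RatFunc.X : RatFunc ℂ) • Xel ⟨k, Nat.lt_of_succ_lt hk⟩)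
            * W (Equiv.swap ⟨k, Nat.lt_of_succ_lt hk⟩ ⟨k + 1, hk⟩) p
          + ((RatFunc.X : RatFunc ℂ) - (RatFunc.X : RatFunc ℂ)⁻¹) • (Xel ⟨k + 1, hk⟩ * p))
    (hTi : ∀ k, Ti k = T k + ((RatFunc.X : RatFunc ℂ)⁻¹ - (RatFunc.X : RatFunc ℂ)) • (1 : Module.End (RatFunc ℂ) (Laur (RatFunc ℂ) n)))
    (hTinv : ∀ k, k + 1 < n → T k * Ti k = 1 ∧ Ti k * T k = 1)
    -- the operator `π⁻¹`
    (piInv : Module.End (RatFunc ℂ) (Laur (RatFunc ℂ) n))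
    (hpiInv : ∀ (v : Fin n →₀ ℤ) (r : (RatFunc ℂ)),
      piInv (mono v r)
        = (algebraMap ℂ (RatFunc ℂ) q₀) ^ (v 0) • mono (Finsupp.equivMapDomain (finRotate n).symm v) r)
    -- the operators `Y_i = T_i ⋯ T_{n-1} ⬝ π⁻¹ ⬝ T_1⁻¹ ⋯ T_{i-1}⁻¹` and their inverses
    (Y Yi : ℕ → Module.End (RatFunc ℂ) (Laur (RatFunc ℂ) n))
    (hY : ∀ i, Y i = aF T i (n - 1 - i) * piInv * aF Ti 0 i)
    (hYinv : ∀ i, i < n → Y i * Yi i = 1 ∧ Yi i * Y i = 1)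
    -- the renormalised operators `Y'_i = τ^{n-1} Y_i`, their inverses, and `D'_i`
    (Y' Y'i : ℕ → Module.End (RatFunc ℂ) (Laur (RatFunc ℂ) n))
    (hY' : ∀ i, Y' i = (RatFunc.X : RatFunc ℂ) ^ (n - 1) • Y i)
    (hY'inv : ∀ i, i < n → Y' i * Y'i i = 1 ∧ Y'i i * Y' i = 1)
    (D' : ℕ → Module.End (RatFunc ℂ) (Laur (RatFunc ℂ) n))
    (hD' : ∀ i, D' i = aF T i (n - 1 - i)
        * ((((algebraMap ℂ (RatFunc ℂ) q₀)) - ((algebraMap ℂ (RatFunc ℂ) q₀))⁻¹)⁻¹ •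
            (XinvOp (n - 1) * (Y' (n - 1) - Y'i (n - 1))))
        * dF T i (n - 1 - i))
    :
    ((∀ k : ℕ, k + 1 < n → ∀ p ∈ polySub (RatFunc ℂ) n, T k p ∈ polySub (RatFunc ℂ) n) ∧
     (∀ i : ℕ, i < n → ∀ p ∈ polySub (RatFunc ℂ) n,
        XOp i p ∈ polySub (RatFunc ℂ) n ∧ Y' i p ∈ polySub (RatFunc ℂ) n ∧
        Y'i i p ∈ polySub (RatFunc ℂ) n ∧ D' i p ∈ polySub (RatFunc ℂ) n)) ∧
    (∀ V : Submodule (RatFunc ℂ) (Laur (RatFunc ℂ) n), V ≤ polySub (RatFunc ℂ) n →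
      (∀ k : ℕ, k + 1 < n → ∀ p ∈ V, T k p ∈ V) →
      (∀ i : ℕ, i < n → ∀ p ∈ V,
        XOp i p ∈ V ∧ Y' i p ∈ V ∧ Y'i i p ∈ V ∧ D' i p ∈ V) →
      V = ⊥ ∨ V = polySub (RatFunc ℂ) n) := by
  refine statement14_general RatFunc.X_ne_zero ((map_ne_zero _).mpr hq₀)
    (fun m hm => algebraMap_pow_ne_ratFuncX_zpow (hq₀root m hm))
    ⟨fun k hk p => ?_, hTi, hpiInv, fun i => by rw [hY', hY], hY'inv, hD'⟩
  rw [hT k hk p, Laur.eq_permVars_of_forall_mono (hW _), AlgEquiv.toLinearMap_apply]
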